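/- Let a k-SAT formula and a non-contradictory partial assignment x*:U→{0,1} be given, and let W be its frozen set (U together with all directly implied variables). Let i₀∈V∖W, s∈{0,1}, and let (U',x*') be the extended partial assignment with U'=U∪{i₀}, x*' agreeing with x* on U and x*'_{i₀}=s. Let D' be the derivation closure of (U',x*'), W' its frozen set (U' together with the variables directly implied by x*'_{U'}), and Z=W'∖W. Let G_Z be the subgraph of the factor graph induced by the variable set Z together with all clauses a∈F with ∂a∩Z≠∅, with the edges between them. If G_Z is acyclic (a tree), then (U',x*') is non-contradictory. -/

import Mathlib

open scoped Classical

/-- A k-SAT formula over variables `V` with clause set `A`: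
`scope a` is the set `∂a` of variables of clause `a`, and `z a i` is the
value of variable `i` that does NOT satisfy clause `a`. -/
structure KSAT (V A : Type) where
  scope : A → Finset V
  z : A → V → Bool

namespace KSAT

variable {V A : Type}

/-- `∂i`: clauses containing variable `i`. -/
noncomputable def nbr [Fintype A] (Φ : KSAT V A) (i : V) : Finset A :=
  Finset.univ.filter fun a => i ∈ Φ.scope a

/-- `∂₊i`: clauses in `∂i` with `z(i,a) = 1`. -/
noncomputable def nbrPos [Fintype A] (Φ : KSAT V A) (i : V) : Finset A :=
  (Φ.nbr i).filter fun a => Φ.z a i = true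

/-- `∂₋i`: clauses in `∂i` with `z(i,a) = 0`. -/
noncomputable def nbrNeg [Fintype A] (Φ : KSAT V A) (i : V) : Finset A :=
  (Φ.nbr i).filter fun a => Φ.z a i = false

/-- `∂₋i(a)`: clauses `b ∈ ∂i ∖ {a}` that disagree with `a` on the satisfying
value of `x_i`. -/
noncomputable def disag [Fintype A] [DecidableEq A] (Φ : KSAT V A) (i : V) (a : A) : Finset A :=
  ((Φ.nbr i).erase a).filter fun b => Φ.z b i = !Φ.z a i

/-- `∂₊i(a)`: clauses `b ∈ ∂i ∖ {a}` that agree with `a` on the satisfying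
value of `x_i`. -/
noncomputable def agree [Fintype A] [DecidableEq A] (Φ : KSAT V A) (i : V) (a : A) : Finset A :=
  ((Φ.nbr i).erase a).filter fun b => Φ.z b i = Φ.z a i

/-- Warning propagation update for a variable-to-clause message `𝔥_{i→a}`,
computed from the clause-to-variable messages `u`.  Messages take values in
`Bool`, with `false` standing for `0` and `true` for `I`. -/
noncomputable def stepH [Fintype A] [DecidableEq A] (Φ : KSAT V A) (U : Finset V)
    (xs : V → Bool) (u : A → V → Bool) (i : V) (a : A) : Bool :=
  decide ((i ∈ U ∧ xs i = Φ.z a i) ∨ ∃ b ∈ Φ.disag i a, u b i = true)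

/-- Warning propagation update for a clause-to-variable message `𝔲_{a→i}`,
computed from the variable-to-clause messages `h`. -/
noncomputable def stepU [DecidableEq V] (Φ : KSAT V A) (h : V → A → Bool)
    (a : A) (i : V) : Bool :=
  decide (∀ j ∈ (Φ.scope a).erase i, h j a = true)

/-- A WP fixed point: the update equations hold on every directed edge of the
factor graph. -/
def IsWPFixedPoint [Fintype A] [DecidableEq V] [DecidableEq A] (Φ : KSAT V A)
    (U : Finset V) (xs : V → Bool) (h : V → A → Bool) (u : A → V → Bool) : Prop :=
  ∀ a : A, ∀ i ∈ Φ.scope a,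
    h i a = Φ.stepH U xs u i a ∧ u a i = Φ.stepU h a i

end KSAT

namespace KSAT

/-- The derivation closure of the partial assignment `(U, xs)` under
unit-clause propagation: `Derived Φ U xs i v` means the pair `(i, v)` belongs
to the smallest set of (variable, value) pairs containing `(i, xs i)` for
every `i ∈ U` and closed under unit-clause propagation. -/
inductive Derived [DecidableEq V] (Φ : KSAT V A) (U : Finset V) (xs : V → Bool) :
    V → Bool → Prop
  | fixed (i : V) (hi : i ∈ U) : Derived Φ U xs i (xs i)
  | ucp (a : A) (i : V) (hia : i ∈ Φ.scope a)
      (hrest : ∀ j ∈ (Φ.scope a).erase i, Derived Φ U xs j (Φ.z a j)) :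
      Derived Φ U xs i (!Φ.z a i)

end KSAT

namespace KSAT

/-- The factor graph of a formula: the bipartite graph on `V ⊕ A` with an edge
between variable `i` and clause `a` iff `i ∈ ∂a`. -/
def factorGraph (Φ : KSAT V A) : SimpleGraph (V ⊕ A) :=
  SimpleGraph.fromRel fun x y =>
    match x, y with
    | Sum.inl i, Sum.inr a => i ∈ Φ.scope a
    | _, _ => False

/-- The frozen set of the partial assignment `(U, xs)`: the fixed variables
together with the directly implied ones. -/
def frozen [DecidableEq V] (Φ : KSAT V A) (U : Finset V) (xs : V → Bool) : Set V :=
  ↑U ∪ {i | ∃ v : Bool, Derived Φ U xs i v}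

/-- The partial assignment `(U, xs)` is contradictory: its derivation closure
contains both `(i,0)` and `(i,1)` for some variable `i`. -/
def Contradictory [DecidableEq V] (Φ : KSAT V A) (U : Finset V) (xs : V → Bool) : Prop :=
  ∃ i : V, Derived Φ U xs i false ∧ Derived Φ U xs i true

end KSAT

/-!
Root the component of the new variable `i₀` in the forest spanned by the newly frozen variables and
the clauses touching them. By induction along unit-clause propagation, a newly frozen variable other
than `i₀` only ever receives the value that satisfies its parent clause. Indeed, suppose that a
clause `a` forces `i` with the help of a newly frozen premise `j`. The value of `j` violates `a`, so
`a` is not the parent of `j`, and `j` must be the parent of `a`. Hence `j` is the only newly frozen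
premise, and if `i` is newly frozen as well, then `i` is a child of `a`. If instead `i` was frozen
before, its old value already satisfies `a`: otherwise `a` would have forced `j` before `i₀` was
fixed. As parents are unique, no variable receives two values.
-/

section RootedForest

variable {X : Type*} {G : SimpleGraph X} {r x y z : X}

/-- In the forest `G` rooted at `r`, the vertex `y` is the parent of `x`: it is the last vertex but
one on a path from `r` to `x`. -/
def IsParent (G : SimpleGraph X) (r y x : X) : Prop :=
  ∃ (p : G.Walk r y) (h : G.Adj y x), (p.concat h).IsPath

theorem not_isParent_root : ¬ IsParent G r y r := by
  rintro ⟨p, h, hp⟩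
  exact ((SimpleGraph.Walk.concat_isPath_iff h).mp hp).2 p.start_mem_support

theorem IsParent.reachable (h : IsParent G r y x) : G.Reachable r x :=
  let ⟨p, hyx, _⟩ := h
  (p.concat hyx).reachable

theorem IsParent.unique (hG : G.IsAcyclic) (hy : IsParent G r y x) (hz : IsParent G r z x) :
    y = z := by
  obtain ⟨p, hyx, hp⟩ := hy
  obtain ⟨q, hzx, hq⟩ := hz
  have hpq : p.concat hyx = q.concat hzx :=
    congrArg Subtype.val ((hG.subsingleton_path r x).elim ⟨_, hp⟩ ⟨_, hq⟩)
  simpa only [SimpleGraph.Walk.penultimate_concat] using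
    congrArg SimpleGraph.Walk.penultimate hpq

theorem isParent_or_isParent_of_adj (hx : G.Reachable r x) (hxy : G.Adj x y) :
    IsParent G r x y ∨ IsParent G r y x := by
  obtain ⟨p, hp⟩ := hx.exists_isPath
  by_cases hy : y ∈ p.support
  · exact .inr ⟨p.takeUntil y hy, hxy.symm, (hp.takeUntil hy).concat
      (SimpleGraph.Walk.endpoint_notMem_support_takeUntil hp hy hxy.ne) hxy.symm⟩
  · exact .inl ⟨p, hxy, hp.concat hy hxy⟩

theorem IsParent.isParent_of_adj_of_ne (hG : G.IsAcyclic) (hy : IsParent G r y x)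
    (hxz : G.Adj x z) (hyz : y ≠ z) : IsParent G r x z :=
  (isParent_or_isParent_of_adj hy.reachable hxz).resolve_right fun hz ↦ hyz (hy.unique hG hz)

theorem isAcyclic_spanningCoe {S : Set X} {H : SimpleGraph S} (hH : H.IsAcyclic) :
    H.spanningCoe.IsAcyclic := by
  intro v c hc
  have hS : ∀ w ∈ c.support, w ∈ S := fun w hw ↦ by
    have hwH := SimpleGraph.mem_support_of_mem_walk_support c hc.not_nil hw
    rw [SimpleGraph.support_spanningCoe] at hwH
    exact Subtype.coe_image_subset S _ hwH
  have hc' : (c.induce S hS).IsCycle := by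
    refine .of_map (f := (SimpleGraph.Embedding.induce S).toHom) ?_
    rwa [SimpleGraph.Walk.map_induce]
  rw [← SimpleGraph.induce_spanningCoe (G := H)] at hH
  exact hH _ hc'

end RootedForest

namespace KSAT

variable {V A : Type} {Φ : KSAT V A} {i₀ i j : V} {a : A} {s v w : Bool}

theorem factorGraph_adj : Φ.factorGraph.Adj (Sum.inl i) (Sum.inr a) ↔ i ∈ Φ.scope a := by
  simp [factorGraph]

/-- The vertex set of the subgraph `G_Z` of the factor graph: the variables in `Z` together with the
clauses touching `Z`. -/
def touching (Φ : KSAT V A) (Z : Set V) : Set (V ⊕ A) :=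
  Sum.inl '' Z ∪ Sum.inr '' {a : A | ∃ i ∈ Z, i ∈ Φ.scope a}

theorem spanningCoe_induce_touching_adj {Z : Set V} (hi : i ∈ Z) (hia : i ∈ Φ.scope a) :
    (Φ.factorGraph.induce (Φ.touching Z)).spanningCoe.Adj (Sum.inl i) (Sum.inr a) :=
  have hi_mem : Sum.inl i ∈ Φ.touching Z := .inl ⟨i, hi, rfl⟩
  have ha_mem : Sum.inr a ∈ Φ.touching Z := .inr ⟨a, ⟨i, hi, hia⟩, rfl⟩
  ⟨Sum.inl_ne_inr, ⟨_, hi_mem⟩, ⟨_, ha_mem⟩, factorGraph_adj.mpr hia, rfl, rfl⟩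

section Derived

variable [DecidableEq V] {U : Finset V} {xs : V → Bool}

theorem mem_frozen_iff : i ∈ Φ.frozen U xs ↔ ∃ v, Φ.Derived U xs i v :=
  ⟨fun h ↦ h.elim (fun hi ↦ ⟨xs i, .fixed i hi⟩) id, .inr⟩

theorem Derived.mem_frozen (h : Φ.Derived U xs i v) : i ∈ Φ.frozen U xs :=
  mem_frozen_iff.mpr ⟨v, h⟩

theorem not_contradictory_iff :
    ¬ Φ.Contradictory U xs ↔
      ∀ i v w, Φ.Derived U xs i v → Φ.Derived U xs i w → v = w := by
  constructor
  · intro hnc i v w hv hw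
    by_contra hvw
    cases v <;> cases w
    exacts [hvw rfl, hnc ⟨i, hv, hw⟩, hnc ⟨i, hw, hv⟩, hvw rfl]
  · rintro h ⟨i, hfalse, htrue⟩
    exact Bool.false_ne_true (h i _ _ hfalse htrue)

theorem Derived.of_mem_frozen_of_notMem_frozen (hi : i ∈ Φ.frozen U xs) (hj : j ∉ Φ.frozen U xs)
    (hja : j ∈ Φ.scope a)
    (hrest : ∀ l ∈ Φ.scope a, l ≠ i → l ≠ j → Φ.Derived U xs l (Φ.z a l)) :
    Φ.Derived U xs i (!Φ.z a i) := by
  obtain ⟨v, hv⟩ := mem_frozen_iff.mp hi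
  have hv_ne : v ≠ Φ.z a i := by
    rintro rfl
    refine hj (Derived.ucp a j hja fun l hl ↦ ?_).mem_frozen
    obtain ⟨hlj, hla⟩ := Finset.mem_erase.mp hl
    by_cases hli : l = i
    · exact hli ▸ hv
    · exact hrest l hla hli hlj
  exact Bool.eq_not_of_ne hv_ne ▸ hv

end Derived

section TreeValue

variable {G : SimpleGraph (V ⊕ A)}

/-- The values prescribed by the forest `G` rooted at `i₀`: the value `s` at the root, and at any
other variable the value satisfying its parent clause. -/
inductive TreeValue (Φ : KSAT V A) (G : SimpleGraph (V ⊕ A)) (i₀ : V) (s : Bool) :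
    V → Bool → Prop
  | root : TreeValue Φ G i₀ s i₀ s
  | of_isParent (a : A) (i : V) (h : IsParent G (Sum.inl i₀) (Sum.inr a) (Sum.inl i)) :
      TreeValue Φ G i₀ s i (!Φ.z a i)

namespace TreeValue

theorem reachable (h : Φ.TreeValue G i₀ s i v) : G.Reachable (Sum.inl i₀) (Sum.inl i) := by
  cases h with
  | root => exact .rfl
  | of_isParent a _ h => exact h.reachable

theorem unique (hG : G.IsAcyclic) (hv : Φ.TreeValue G i₀ s i v) (hw : Φ.TreeValue G i₀ s i w) :
    v = w := by
  cases hv with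
  | root =>
    cases hw with
    | root => rfl
    | of_isParent b _ hb => exact absurd hb not_isParent_root
  | of_isParent a _ ha =>
    cases hw with
    | root => exact absurd ha not_isParent_root
    | of_isParent b _ hb => rw [Sum.inr_injective (ha.unique hG hb)]

theorem isParent_of_adj (hG : G.IsAcyclic) (hj : Φ.TreeValue G i₀ s j (Φ.z a j))
    (hja : G.Adj (Sum.inl j) (Sum.inr a)) : IsParent G (Sum.inl i₀) (Sum.inl j) (Sum.inr a) :=
  (isParent_or_isParent_of_adj hj.reachable hja).resolve_right fun h ↦
    Bool.not_ne_self _ (unique hG (.of_isParent a j h) hj)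

theorem eq_of_adj (hG : G.IsAcyclic) (hi : Φ.TreeValue G i₀ s i (Φ.z a i))
    (hj : Φ.TreeValue G i₀ s j (Φ.z a j)) (hia : G.Adj (Sum.inl i) (Sum.inr a))
    (hja : G.Adj (Sum.inl j) (Sum.inr a)) : i = j :=
  Sum.inl_injective ((hi.isParent_of_adj hG hia).unique hG (hj.isParent_of_adj hG hja))

theorem propagate (hG : G.IsAcyclic) (hj : Φ.TreeValue G i₀ s j (Φ.z a j))
    (hja : G.Adj (Sum.inl j) (Sum.inr a)) (hia : G.Adj (Sum.inl i) (Sum.inr a)) (hji : j ≠ i) :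
    Φ.TreeValue G i₀ s i (!Φ.z a i) :=
  .of_isParent a i <|
    (hj.isParent_of_adj hG hja).isParent_of_adj_of_ne hG hia.symm (Sum.inl_injective.ne hji)

end TreeValue

end TreeValue

section Extension

variable [DecidableEq V] {U : Finset V} {xs : V → Bool} {G : SimpleGraph (V ⊕ A)}

theorem Derived.derived_or_treeValue (hG : G.IsAcyclic) (hi₀ : i₀ ∉ Φ.frozen U xs)
    (hadj : ∀ i ∈ Φ.frozen (insert i₀ U) (Function.update xs i₀ s) \ Φ.frozen U xs,
      ∀ a, i ∈ Φ.scope a → G.Adj (Sum.inl i) (Sum.inr a))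
    (h : Φ.Derived (insert i₀ U) (Function.update xs i₀ s) i v) :
    Φ.Derived U xs i v ∨ i ∉ Φ.frozen U xs ∧ Φ.TreeValue G i₀ s i v := by
  induction h with
  | fixed i hi =>
    obtain rfl | hne := eq_or_ne i i₀
    · exact .inr ⟨hi₀, by simpa only [Function.update_self] using .root⟩
    · rw [Function.update_of_ne hne]
      exact .inl (.fixed i (Finset.mem_of_mem_insert_of_ne hi hne))
  | ucp a i hia hrest ih =>
    by_cases hold : ∀ j ∈ (Φ.scope a).erase i, Φ.Derived U xs j (Φ.z a j)
    · exact .inl (.ucp a i hia hold)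
    push Not at hold
    obtain ⟨j, hj, hj_not_derived⟩ := hold
    obtain ⟨hji, hja⟩ := Finset.mem_erase.mp hj
    obtain ⟨hj_new, hj_tree⟩ := (ih j hj).resolve_left hj_not_derived
    have hja_adj := hadj j ⟨(hrest j hj).mem_frozen, hj_new⟩ a hja
    by_cases hi : i ∈ Φ.frozen U xs
    · refine .inl (.of_mem_frozen_of_notMem_frozen hi hj_new hja fun l hla hli hlj ↦ ?_)
      have hl := Finset.mem_erase.mpr ⟨hli, hla⟩
      refine (ih l hl).resolve_right fun ⟨hl_new, hl_tree⟩ ↦ hlj ?_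
      exact hl_tree.eq_of_adj hG hj_tree (hadj l ⟨(hrest l hl).mem_frozen, hl_new⟩ a hla) hja_adj
    · have hia_adj := hadj i ⟨(Derived.ucp a i hia hrest).mem_frozen, hi⟩ a hia
      exact .inr ⟨hi, hj_tree.propagate hG hja_adj hia_adj hji⟩

end Extension

end KSAT

theorem tree_implies_no_contradiction_general {V A : Type} [DecidableEq V] {Φ : KSAT V A}
    {U : Finset V} {xs : V → Bool} (hnc : ¬ Φ.Contradictory U xs)
    {i₀ : V} (hi₀ : i₀ ∉ Φ.frozen U xs) (s : Bool)
    (hacyc : (Φ.factorGraph.induce (Φ.touching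
      (Φ.frozen (insert i₀ U) (Function.update xs i₀ s) \ Φ.frozen U xs))).IsAcyclic) :
    ¬ Φ.Contradictory (insert i₀ U) (Function.update xs i₀ s) := by
  have hG := isAcyclic_spanningCoe hacyc
  have old_or_tree {i : V} {v : Bool} :=
    KSAT.Derived.derived_or_treeValue (i := i) (v := v) hG hi₀
      fun _ hi _ ↦ KSAT.spanningCoe_induce_touching_adj hi
  rw [KSAT.not_contradictory_iff] at hnc ⊢
  intro i v w hv hw
  rcases old_or_tree hv, old_or_tree hw with ⟨hv | ⟨hi, hv⟩, hw | ⟨hi', hw⟩⟩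
  · exact hnc i v w hv hw
  · exact absurd hv.mem_frozen hi'
  · exact absurd hw.mem_frozen hi
  · exact hv.unique hG hw

/-- fix one more variable `i₀ ∉ W` to the value `s`.  If the
subgraph of the factor graph induced by the newly frozen variables
`Z = W' ∖ W` together with all clauses touching `Z` is acyclic (a tree), then
the extended partial assignment is non-contradictory. -/
theorem tree_implies_no_contradiction
    {V A : Type} [Fintype V] [Fintype A] [DecidableEq V] [DecidableEq A]
    (k : ℕ) (Φ : KSAT V A) (hk : ∀ a : A, (Φ.scope a).card = k)
    (U : Finset V) (xs : V → Bool)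
    (hnc : ¬ Φ.Contradictory U xs)
    (i₀ : V) (hi₀ : i₀ ∉ Φ.frozen U xs) (s : Bool)
    (U' : Finset V) (hU' : U' = insert i₀ U)
    (xs' : V → Bool) (hxs' : xs' = Function.update xs i₀ s)
    (Z : Set V) (hZ : Z = Φ.frozen U' xs' \ Φ.frozen U xs)
    (S : Set (V ⊕ A))
    (hS : S = Sum.inl '' Z ∪ Sum.inr '' {a : A | ∃ i ∈ Z, i ∈ Φ.scope a})
    (hacyc : (Φ.factorGraph.induce S).IsAcyclic) :
    ¬ Φ.Contradictory U' xs' := by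
  subst hU' hxs' hZ hS
  exact tree_implies_no_contradiction_general hnc hi₀ s hacyc
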